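/- arXiv:2010.16329 — 2 statements merged into one kernel-verified Lean document; each statement's English description precedes it below -/
import Mathlib

section
/- Let k be a field and π_1 the nilpotent endomorphism of V = k^6 given in a basis e_1,…,e_6 adapted to the flag V_1 = ⟨e_1,e_2⟩ ⊂ V_2 = ⟨e_1,…,e_4⟩ ⊂ V by π_1(e_3) = e_1, π_1(e_4) = e_2, and π_1(e_i) = 0 otherwise. Then π_1 satisfies π_1(V_i) ⊆ V_{i−1}, π_1^2 = 0, and its Jordan partition is (2,2,1,1) (dual/Hodge partition (4,2)); moreover any endomorphism π of V with π(V_i) ⊆ V_{i−1} whose restriction to V_2 equals π_1|_{V_2} satisfies: if π^2 = 0 then π(V) ⊆ V_1 and dim ker π ≥ 4, hence π does not have Jordan partition (2,2,2). -/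
/-- The matrix of `π₁` on `k^6`: `π₁ e₃ = e₁`, `π₁ e₄ = e₂` (0-indexed: `e_2 ↦ e_0`,
`e_3 ↦ e_1`), all other basis vectors to `0`. -/
def stmt9Mat (k : Type*) [Field k] : Matrix (Fin 6) (Fin 6) k :=
  Matrix.of fun i j => if (i = 0 ∧ j = 2) ∨ (i = 1 ∧ j = 3) then 1 else 0

def stmt9pi (k : Type*) [Field k] : (Fin 6 → k) →ₗ[k] (Fin 6 → k) :=
  Matrix.toLin' (stmt9Mat k)

/-- `V_1 = ⟨e_1, e_2⟩` (0-indexed `e_0, e_1`). -/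
def stmt9V1 (k : Type*) [Field k] : Submodule k (Fin 6 → k) :=
  Submodule.span k {Pi.single (0 : Fin 6) (1 : k), Pi.single (1 : Fin 6) (1 : k)}

/-- `V_2 = ⟨e_1, …, e_4⟩`. -/
def stmt9V2 (k : Type*) [Field k] : Submodule k (Fin 6 → k) :=
  Submodule.span k {Pi.single (0 : Fin 6) (1 : k), Pi.single (1 : Fin 6) (1 : k),
    Pi.single (2 : Fin 6) (1 : k), Pi.single (3 : Fin 6) (1 : k)}

theorem aux9_V1 (k : Type*) [Field k] (x : Fin 6 → k) :
    x ∈ stmt9V1 k ↔ x 2 = 0 ∧ x 3 = 0 ∧ x 4 = 0 ∧ x 5 = 0 := by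
  unfold stmt9V1
  rw [Submodule.mem_span_pair]
  constructor
  · rintro ⟨a, b, rfl⟩
    simp [Pi.single_apply]
  · rintro ⟨h2, h3, h4, h5⟩
    refine ⟨x 0, x 1, ?_⟩
    ext i
    fin_cases i <;> simp [Pi.single_apply, *]

theorem aux9_V2 (k : Type*) [Field k] (x : Fin 6 → k) :
    x ∈ stmt9V2 k ↔ x 4 = 0 ∧ x 5 = 0 := by
  unfold stmt9V2
  simp only [Submodule.mem_span_insert, Submodule.mem_span_singleton]
  constructor
  · rintro ⟨a, _, ⟨b, _, ⟨c, _, ⟨d, rfl⟩, rfl⟩, rfl⟩, rfl⟩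
    simp [Pi.single_apply]
  · rintro ⟨h4, h5⟩
    refine ⟨x 0, _, ⟨x 1, _, ⟨x 2, _, ⟨x 3, rfl⟩, rfl⟩, rfl⟩, ?_⟩
    ext i
    fin_cases i <;> simp [Pi.single_apply, *]

theorem aux9_pi (k : Type*) [Field k] (x : Fin 6 → k) :
    stmt9pi k x = ![x 2, x 3, 0, 0, 0, 0] := by
  ext i
  fin_cases i <;>
    simp [stmt9pi, stmt9Mat, Matrix.mulVec, dotProduct, Fin.sum_univ_six]

theorem aux9_rank (k : Type*) [Field k] : Module.finrank k (stmt9V1 k) = 2 := by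
  have hli : LinearIndependent k
      ![(Pi.single (0 : Fin 6) (1 : k) : Fin 6 → k), Pi.single (1 : Fin 6) (1 : k)] := by
    rw [LinearIndependent.pair_iff]
    intro s t h
    have h0 := congrFun h 0
    have h1 := congrFun h 1
    simp [Pi.single_apply] at h0 h1
    exact ⟨h0, h1⟩
  have := finrank_span_eq_card hli
  rw [Matrix.range_cons_cons_empty, Fintype.card_fin] at this
  exact this

/-- `π₁` satisfies `π₁(V_i) ⊆ V_{i−1}`, `π₁² = 0`, has Jordan partition
`(2,2,1,1)` (for a square-zero endomorphism of `k^6`: rank `2`, kernel of dimension `4`);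
and any `π` with `π(V_i) ⊆ V_{i−1}` restricting to `π₁` on `V_2` satisfies: if `π² = 0`
then `π(V) ⊆ V_1` and `dim ker π ≥ 4`, hence `π` does not have Jordan partition `(2,2,2)`
(i.e. `dim ker π ≠ 3`). -/
theorem stmt_9 (k : Type*) [Field k] :
    Submodule.map (stmt9pi k) ⊤ ≤ stmt9V2 k ∧
    Submodule.map (stmt9pi k) (stmt9V2 k) ≤ stmt9V1 k ∧
    Submodule.map (stmt9pi k) (stmt9V1 k) = ⊥ ∧
    stmt9pi k ∘ₗ stmt9pi k = 0 ∧
    Module.finrank k (LinearMap.range (stmt9pi k)) = 2 ∧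
    Module.finrank k (LinearMap.ker (stmt9pi k)) = 4 ∧
    ∀ π : (Fin 6 → k) →ₗ[k] (Fin 6 → k),
      Submodule.map π ⊤ ≤ stmt9V2 k →
      Submodule.map π (stmt9V2 k) ≤ stmt9V1 k →
      Submodule.map π (stmt9V1 k) = ⊥ →
      (∀ x ∈ stmt9V2 k, π x = stmt9pi k x) →
      π ∘ₗ π = 0 →
      (Submodule.map π ⊤ ≤ stmt9V1 k ∧
       4 ≤ Module.finrank k (LinearMap.ker π) ∧
       Module.finrank k (LinearMap.ker π) ≠ 3) := by
  have hr : LinearMap.range (stmt9pi k) = stmt9V1 k := by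
    ext x
    rw [aux9_V1, LinearMap.mem_range]
    constructor
    · rintro ⟨y, rfl⟩
      simp [aux9_pi]
    · rintro ⟨h2, h3, h4, h5⟩
      refine ⟨![0, 0, x 0, x 1, 0, 0], ?_⟩
      rw [aux9_pi]
      ext i
      fin_cases i <;> simp [*]
  have hrk : Module.finrank k (LinearMap.range (stmt9pi k)) = 2 := by
    rw [hr, aux9_rank]
  refine ⟨?_, ?_, ?_, ?_, hrk, ?_, ?_⟩
  · rintro _ ⟨x, -, rfl⟩
    simp [aux9_V2, aux9_pi]
  · rintro _ ⟨x, -, rfl⟩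
    simp [aux9_V1, aux9_pi]
  · rw [eq_bot_iff]
    rintro _ ⟨x, hx, rfl⟩
    have hx' := (aux9_V1 k x).1 hx
    rw [Submodule.mem_bot, aux9_pi]
    ext i
    fin_cases i <;> simp [hx']
  · apply LinearMap.ext
    intro x
    rw [LinearMap.comp_apply, aux9_pi, aux9_pi]
    ext i
    fin_cases i <;> simp
  · have := LinearMap.finrank_range_add_finrank_ker (stmt9pi k)
    rw [hrk, Module.finrank_fin_fun] at this
    omega
  · intro π h1 _ _ h4 h5
    have hle : Submodule.map π ⊤ ≤ stmt9V1 k := by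
      rintro _ ⟨x, -, rfl⟩
      have hm : π x ∈ stmt9V2 k := h1 ⟨x, trivial, rfl⟩
      have e : π (π x) = 0 := LinearMap.congr_fun h5 x
      rw [h4 _ hm, aux9_pi] at e
      have e0 := congrFun e 0
      have e1 := congrFun e 1
      rw [aux9_V2] at hm
      rw [aux9_V1]
      exact ⟨by simpa using e0, by simpa using e1, hm⟩
    have hk := LinearMap.finrank_range_add_finrank_ker π
    have hf := Submodule.finrank_mono hle
    rw [Submodule.map_top, aux9_rank] at hf
    rw [Module.finrank_fin_fun] at hk
    exact ⟨hle, by omega, by omega⟩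
end

section
/- Let k be a field of characteristic p, and consider the moduli of pairs (ω^[1] ⊆ F) where F ⊆ Λ := k^4 (with basis πe_1, πe_2, e_1, e_2 and π acting by π(e_i) = πe_i, π(πe_i) = 0) is a 2-dimensional subspace totally isotropic for the symplectic form J with J(πe_i, e_i) = 1, J(e_i, πe_i) = −1 and all other pairings of basis vectors zero, ω^[1] ⊆ F is 1-dimensional with π·ω^[1] = 0 and π·F ⊆ ω^[1]. On the affine chart where F is the column span of the matrix with rows (1,0),(x,a),(0,b),(0,y) (in basis πe_1, πe_2, e_1, e_2, first column spanning ω^[1]), the conditions π F ⊆ ω^[1] and F totally isotropic are equivalent to y = bx and b(1 + x^2) = 0. -/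
/-- The action of `π` on `Λ = k^4` in the basis `(πe₁, πe₂, e₁, e₂)`:
`π · e₁ = πe₁`, `π · e₂ = πe₂`, `π · πeᵢ = 0`. -/
def stmt10pi (k : Type*) [Field k] : (Fin 4 → k) →ₗ[k] (Fin 4 → k) :=
  Matrix.toLin' (Matrix.of fun i j : Fin 4 =>
    if (i = 0 ∧ j = 2) ∨ (i = 1 ∧ j = 3) then (1 : k) else 0)

/-- The symplectic form `J` on `Λ = k^4` with `J(πeᵢ, eᵢ) = 1`, `J(eᵢ, πeᵢ) = −1`, all
other pairings of basis vectors zero. -/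
def stmt10J (k : Type*) [Field k] (v w : Fin 4 → k) : k :=
  v 0 * w 2 - v 2 * w 0 + v 1 * w 3 - v 3 * w 1

/-- local model for U(1,1), ramified case: on the chart where
`ω^[1] = ⟨(1,x,0,0)⟩` and `F = ω^[1] + ⟨(0,a,b,y)⟩`, the conditions `π F ⊆ ω^[1]` and
`F` totally isotropic for `J` are equivalent to `y = b·x` and `b(1 + x²) = 0`. -/
theorem stmt_10 (p : ℕ) (hp : p.Prime) (k : Type*) [Field k] [CharP k p]
    (x a b y : k) :
    ((∀ v ∈ Submodule.span k {![(1 : k), x, 0, 0], ![(0 : k), a, b, y]},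
        stmt10pi k v ∈ Submodule.span k {![(1 : k), x, 0, 0]}) ∧
      (∀ v ∈ Submodule.span k {![(1 : k), x, 0, 0], ![(0 : k), a, b, y]},
       ∀ w ∈ Submodule.span k {![(1 : k), x, 0, 0], ![(0 : k), a, b, y]},
        stmt10J k v w = 0))
    ↔ (y = b * x ∧ b * (1 + x ^ 2) = 0) := by
  have hpi : ∀ v : Fin 4 → k, stmt10pi k v = ![v 2, v 3, 0, 0] := by
    intro v
    ext i
    fin_cases i <;>
      simp [stmt10pi, Matrix.toLin'_apply, Matrix.mulVec, dotProduct, Fin.sum_univ_four]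
  constructor
  · rintro ⟨h1, h2⟩
    have hu : ![(1 : k), x, 0, 0] ∈
        Submodule.span k {![(1 : k), x, 0, 0], ![(0 : k), a, b, y]} :=
      Submodule.subset_span (by simp)
    have hv : ![(0 : k), a, b, y] ∈
        Submodule.span k {![(1 : k), x, 0, 0], ![(0 : k), a, b, y]} :=
      Submodule.subset_span (by simp)
    have h3 := h1 _ hv
    rw [hpi, Submodule.mem_span_singleton] at h3
    obtain ⟨c, hc⟩ := h3
    have e0 := congrFun hc 0
    have e1 := congrFun hc 1
    simp at e0 e1
    have h4 := h2 _ hu _ hv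
    simp [stmt10J] at h4
    subst e0
    subst e1
    exact ⟨rfl, by linear_combination h4⟩
  · rintro ⟨rfl, h⟩
    constructor
    · intro v hv
      obtain ⟨c, d, rfl⟩ := Submodule.mem_span_pair.1 hv
      rw [hpi, Submodule.mem_span_singleton]
      refine ⟨d * b, ?_⟩
      ext i
      fin_cases i <;> simp [mul_assoc]
    · intro v hv w hw
      obtain ⟨c, d, rfl⟩ := Submodule.mem_span_pair.1 hv
      obtain ⟨c', d', rfl⟩ := Submodule.mem_span_pair.1 hw
      simp [stmt10J]
      linear_combination (c * d' - d * c') * h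
end
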